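/- Finite speed of spread (the α = 1 case): let g : [0,1] → ℝ be continuously differentiable with g(0) = g(1) = 0 and g'(0) < 0. Let u : ℝ × [0,∞) → ℝ be continuous with 0 ≤ u(x,t) ≤ 1 for all (x,t), a mild solution of ∂_t u + Au = g(u) on ℝ × [0,T] for every T > 0, whose initial datum u₀ = u(·,0) is continuous, satisfies 0 ≤ u₀ ≤ 1, u₀(x) = 0 for all x < 0, and lim_{x→∞} u₀(x) = 1. Then there exists c > 0 such that for every ε > 0 there exists T > 0 with u(x,t) < ε for all t ≥ T and all x ≤ −ct; that is, limsup_{t→∞} sup_{x ≤ −ct} u(x,t) = 0 for some c > 0. -/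

import Mathlib

open Real MeasureTheory Filter Topology

/-- The fundamental solution at time `t` of the free equation `∂_t u + Au = 0`,
where `A` is the order-1 pseudodifferential operator with symbol
`λ ↦ e^{−iπ·sign(λ)·β/2}|λ|`, `κ = cos(πβ/2)`, `σ = sin(πβ/2)`. -/
noncomputable def stableKernel (κ σ t x : ℝ) : ℝ :=
  κ * t / (π * ((x - σ * t) ^ 2 + (κ * t) ^ 2))

/-- `u : ℝ × [0,T] → ℝ` is a mild solution of `∂_t u + Au = g(u)`:
`u(x,t) = ∫ p_t(x−y)·u(y,0) dy + ∫₀ᵗ ∫ p_{t−s}(x−y)·g(u(y,s)) dy ds`. -/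
def IsMildSolution (κ σ : ℝ) (g : ℝ → ℝ) (T : ℝ) (u : ℝ → ℝ → ℝ) : Prop :=
  ∀ x t : ℝ, 0 < t → t ≤ T →
    u x t = (∫ y : ℝ, stableKernel κ σ t (x - y) * u y 0) +
      ∫ s in Set.Ioc (0 : ℝ) t,
        ∫ y : ℝ, stableKernel κ σ (t - s) (x - y) * g (u y s)

open ProbabilityTheory
open scoped NNReal FourierTransform

/-!
The kernel `p_t` is the density of `tZ`, where `Z` has a Cauchy law `μ`. This law is strictly
1-stable, so `P_t f(x) = E[f(x - tZ)]` is a semigroup and, for a fixed point `(x, t)`, the function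
`φ(s) = P_{t-s} u(s)(x)` has derivative `P_{t-s} g(u(s))(x)`, with `φ(t) = u(x,t)`.

Let `g(v) ≤ -a v` on `[0, δ]`. If `u(s) ≤ δ` on the half-line `y ≤ x + (t - s)Λ`, then up to the
probability `μ((-∞, -Λ])` the average in `φ'(s)` only sees points where the reaction is damping, so
`φ' + aφ` is at most a constant times this probability, and Grönwall's inequality bounds `φ`.
By 1-stability, the tail does not depend on `t - s`. Taking `Λ = c` large keeps `u ≤ δ` in the cone
`x ≤ x₀ - ct`, by a continuation argument with time steps of fixed length. Looking back from a point
of a slightly smaller cone over a long time `N`, with `Λ` large, then makes `u` arbitrarily small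
there.
-/

section CauchyLaw

variable {c : ℝ} (θ : ℝ)

theorem cexp_neg_mul_abs_add_mul_I_eqOn_Ioi :
    Set.EqOn (fun w : ℝ ↦ Complex.exp (-(c * |w| : ℝ) + (θ * w : ℝ) * Complex.I))
      (fun w ↦ Complex.exp ((-c + θ * Complex.I) * w)) (Set.Ioi 0) := by
  intro w hw
  simp only [abs_of_pos (Set.mem_Ioi.1 hw)]
  congr 1; push_cast; ring

theorem cexp_neg_mul_abs_add_mul_I_eqOn_Iic :
    Set.EqOn (fun w : ℝ ↦ Complex.exp (-(c * |w| : ℝ) + (θ * w : ℝ) * Complex.I))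
      (fun w ↦ Complex.exp ((c + θ * Complex.I) * w)) (Set.Iic 0) := by
  intro w hw
  simp only [abs_of_nonpos (Set.mem_Iic.1 hw)]
  congr 1; push_cast; ring

theorem integrable_cexp_neg_mul_abs_add_mul_I (hc : 0 < c) :
    Integrable (fun w : ℝ ↦ Complex.exp (-(c * |w| : ℝ) + (θ * w : ℝ) * Complex.I)) := by
  rw [← integrableOn_univ, ← Set.Iic_union_Ioi (a := (0 : ℝ)), integrableOn_union,
    integrableOn_congr_fun (cexp_neg_mul_abs_add_mul_I_eqOn_Iic θ) measurableSet_Iic,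
    integrableOn_congr_fun (cexp_neg_mul_abs_add_mul_I_eqOn_Ioi θ) measurableSet_Ioi]
  exact ⟨integrableOn_exp_mul_complex_Iic (by simpa using hc) 0,
    integrableOn_exp_mul_complex_Ioi (by simpa using hc) 0⟩

theorem integral_cexp_neg_mul_abs_add_mul_I (hc : 0 < c) :
    ∫ w : ℝ, Complex.exp (-(c * |w| : ℝ) + (θ * w : ℝ) * Complex.I) =
      (2 * c / (c ^ 2 + θ ^ 2) : ℝ) := by
  have re_neg : (-c + θ * Complex.I).re < 0 := by simpa using hc
  have re_pos : 0 < (c + θ * Complex.I).re := by simpa using hc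
  have ne_right : -c + θ * Complex.I ≠ 0 := fun h ↦ by simp [h] at re_neg
  have ne_left : c + θ * Complex.I ≠ 0 := fun h ↦ by simp [h] at re_pos
  have ne_sq : (c : ℂ) ^ 2 + (θ : ℂ) ^ 2 ≠ 0 := by
    exact_mod_cast (by positivity : c ^ 2 + θ ^ 2 ≠ 0)
  have F_int := integrable_cexp_neg_mul_abs_add_mul_I θ hc
  rw [← intervalIntegral.integral_Iic_add_Ioi F_int.integrableOn F_int.integrableOn,
    setIntegral_congr_fun measurableSet_Ioi (cexp_neg_mul_abs_add_mul_I_eqOn_Ioi θ),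
    setIntegral_congr_fun measurableSet_Iic (cexp_neg_mul_abs_add_mul_I_eqOn_Iic θ),
    integral_exp_mul_complex_Ioi re_neg, integral_exp_mul_complex_Iic re_pos]
  simp only [Complex.ofReal_zero, mul_zero, Complex.exp_zero]
  push_cast
  field_simp
  ring_nf
  simp only [Complex.I_sq]
  ring

theorem fourier_cexp_eq_cauchyPDFReal (σ : ℝ) {γ : ℝ≥0} (hγ : γ ≠ 0) :
    𝓕 (fun w : ℝ ↦ Complex.exp (-(2 * π * γ * |w| : ℝ) + (2 * π * σ * w : ℝ) * Complex.I)) =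
      fun v ↦ (cauchyPDFReal σ γ v : ℂ) := by
  ext v
  have hc : (0 : ℝ) < 2 * π * γ := by positivity
  calc 𝓕 (fun w : ℝ ↦ Complex.exp (-(2 * π * γ * |w| : ℝ) + (2 * π * σ * w : ℝ) * Complex.I)) v
    _ = ∫ w : ℝ, Complex.exp
          (-(2 * π * γ * |w| : ℝ) + (2 * π * (σ - v) * w : ℝ) * Complex.I) := by
      rw [Real.fourier_eq']
      congr 1; ext w
      rw [smul_eq_mul, ← Complex.exp_add]
      congr 1
      simp only [RCLike.inner_apply, conj_trivial]
      push_cast; ring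
    _ = (cauchyPDFReal σ γ v : ℂ) := by
      rw [integral_cexp_neg_mul_abs_add_mul_I _ hc, cauchyPDFReal_def]
      congr 1
      have : (v - σ) ^ 2 + (γ : ℝ) ^ 2 ≠ 0 := by positivity
      have : (2 * π * γ) ^ 2 + (2 * π * (σ - v)) ^ 2 = (2 * π) ^ 2 * ((v - σ) ^ 2 + γ ^ 2) := by
        ring
      rw [this]
      field_simp

theorem integral_cauchyMeasure {E : Type*} [NormedAddCommGroup E] [NormedSpace ℝ E]
    (σ : ℝ) {γ : ℝ≥0} (hγ : γ ≠ 0) (f : ℝ → E) :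
    ∫ z, f z ∂cauchyMeasure σ γ = ∫ z, cauchyPDFReal σ γ z • f z := by
  rw [cauchyMeasure_of_scale_ne_zero _ hγ,
    integral_withDensity_eq_integral_toReal_smul (by fun_prop) (by simp [cauchyPDF])]
  simp only [cauchyPDF, ENNReal.toReal_ofReal (cauchyPDF_pos σ hγ _).le]

theorem charFun_cauchyMeasure (σ : ℝ) (γ : ℝ≥0) (t : ℝ) :
    charFun (cauchyMeasure σ γ) t =
      Complex.exp (-(γ * |t| : ℝ) + (σ * t : ℝ) * Complex.I) := by
  rcases eq_or_ne γ 0 with rfl | hγ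
  · simp [cauchyMeasure_zero_scale, mul_comm]
  set F : ℝ → ℂ := fun w ↦
    Complex.exp (-(2 * π * γ * |w| : ℝ) + (2 * π * σ * w : ℝ) * Complex.I) with hF
  have F_cont : Continuous F := by fun_prop
  have F_int : Integrable F := integrable_cexp_neg_mul_abs_add_mul_I _ (by positivity)
  have F_fourier : 𝓕 F = fun v ↦ (cauchyPDFReal σ γ v : ℂ) := fourier_cexp_eq_cauchyPDFReal σ hγ
  have F_inversion : 𝓕⁻ (𝓕 F) = F := F_cont.fourierInv_fourier_eq F_int <| by
    rw [F_fourier]; exact (integrable_cauchyPDFReal σ).ofReal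
  calc charFun (cauchyMeasure σ γ) t
    _ = 𝓕⁻ (𝓕 F) (t / (2 * π)) := by
      rw [charFun_apply_real, integral_cauchyMeasure σ hγ, Real.fourierInv_eq', F_fourier]
      congr 1; ext v
      have : 2 * π * (v * (t / (2 * π))) = t * v := by field_simp
      rw [Complex.real_smul, smul_eq_mul, mul_comm, real_inner_comm, RCLike.inner_apply,
        conj_trivial, this, Complex.ofReal_mul]
    _ = F (t / (2 * π)) := by rw [F_inversion]
    _ = Complex.exp (-(γ * |t| : ℝ) + (σ * t : ℝ) * Complex.I) := by
      simp only [hF, abs_div, abs_of_pos two_pi_pos]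
      congr 3 <;> field_simp

end CauchyLaw

/-- Strict stability of index one: if `X, Y` are independent with law `μ`, then `aX + bY` has the
law of `(a + b)X` for all `a, b ≥ 0`. -/
def IsStrictlyOneStable (μ : Measure ℝ) : Prop :=
  ∀ ⦃a b : ℝ⦄, 0 ≤ a → 0 ≤ b → μ.map (a * ·) ∗ μ.map (b * ·) = μ.map ((a + b) * ·)

theorem isStrictlyOneStable_cauchyMeasure (σ : ℝ) (γ : ℝ≥0) :
    IsStrictlyOneStable (cauchyMeasure σ γ) := by
  intro a b ha hb
  have (r : ℝ) : IsProbabilityMeasure ((cauchyMeasure σ γ).map (r * ·)) :=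
    Measure.isProbabilityMeasure_map (by fun_prop)
  refine Measure.ext_of_charFun (funext fun t ↦ ?_)
  simp only [charFun_conv, charFun_map_mul, charFun_cauchyMeasure, ← Complex.exp_add, abs_mul,
    abs_of_nonneg ha, abs_of_nonneg hb, abs_of_nonneg (add_nonneg ha hb)]
  congr 1
  push_cast; ring

theorem IsStrictlyOneStable.integral_integral {μ : Measure ℝ} [IsFiniteMeasure μ]
    (hμ : IsStrictlyOneStable μ) {a b : ℝ} (ha : 0 ≤ a) (hb : 0 ≤ b) {k : ℝ → ℝ}
    (hk : Continuous k) {C : ℝ} (hC : ∀ x, |k x| ≤ C) :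
    ∫ z, ∫ w, k (a * z + b * w) ∂μ ∂μ = ∫ z, k ((a + b) * z) ∂μ := by
  have map_prod : (μ.prod μ).map (fun p ↦ a * p.1 + b * p.2) = μ.map ((a + b) * ·) := by
    rw [← hμ ha hb, Measure.conv, Measure.map_prod_map μ μ (by fun_prop) (by fun_prop),
      Measure.map_map (by fun_prop) (by fun_prop)]
    rfl
  have k_int : Integrable (fun p : ℝ × ℝ ↦ k (a * p.1 + b * p.2)) (μ.prod μ) :=
    .of_bound (by fun_prop) C (.of_forall fun _ ↦ hC _)
  calc ∫ z, ∫ w, k (a * z + b * w) ∂μ ∂μ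
    _ = ∫ p, k (a * p.1 + b * p.2) ∂μ.prod μ := (integral_prod _ k_int).symm
    _ = ∫ x, k x ∂(μ.prod μ).map (fun p ↦ a * p.1 + b * p.2) :=
      (integral_map (by fun_prop) hk.aestronglyMeasurable).symm
    _ = ∫ z, k ((a + b) * z) ∂μ := by
      rw [map_prod, integral_map (by fun_prop) hk.aestronglyMeasurable]

/-- The operator `P_t f(x) = E[f(x - tZ)]`, where `Z` has law `μ`. For strictly 1-stable `μ` these
operators form a convolution semigroup in `t ≥ 0`. -/
noncomputable def stableSemigroup (μ : Measure ℝ) (t : ℝ) (f : ℝ → ℝ) (x : ℝ) : ℝ :=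
  ∫ z, f (x - t * z) ∂μ

section StableSemigroup

variable {μ : Measure ℝ} [IsProbabilityMeasure μ] {f : ℝ → ℝ} {C : ℝ}

theorem stableSemigroup_zero (f : ℝ → ℝ) (x : ℝ) : stableSemigroup μ 0 f x = f x := by
  simp [stableSemigroup]

theorem integrable_comp_sub_mul (hf : Continuous f) (hC : ∀ y, |f y| ≤ C) (t x : ℝ) :
    Integrable (fun z ↦ f (x - t * z)) μ :=
  .of_bound (by fun_prop) C (.of_forall fun _ ↦ hC _)

theorem abs_stableSemigroup_le (hC : ∀ y, |f y| ≤ C) (t x : ℝ) :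
    |stableSemigroup μ t f x| ≤ C := by
  simpa [stableSemigroup] using norm_integral_le_of_norm_le_const (μ := μ)
    (f := fun z ↦ f (x - t * z)) (.of_forall fun z ↦ hC (x - t * z))

theorem continuous_stableSemigroup {X : Type*} [TopologicalSpace X] [FirstCountableTopology X]
    {τ ξ : X → ℝ} {F : X → ℝ → ℝ} (hτ : Continuous τ) (hξ : Continuous ξ)
    (hF : Continuous ↿F) (hC : ∀ p y, |F p y| ≤ C) :
    Continuous fun p ↦ stableSemigroup μ (τ p) (F p) (ξ p) := by
  refine continuous_of_dominated (bound := fun _ ↦ C) (fun p ↦ ?_)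
    (fun p ↦ .of_forall fun z ↦ hC _ _) (integrable_const C) (.of_forall fun z ↦ ?_)
  · exact (hF.comp (by fun_prop : Continuous fun z ↦ (p, ξ p - τ p * z))).aestronglyMeasurable
  · exact hF.comp (by fun_prop : Continuous fun p ↦ (p, ξ p - τ p * z))

theorem stableSemigroup_add_apply (hμ : IsStrictlyOneStable μ) {a b : ℝ} (ha : 0 ≤ a) (hb : 0 ≤ b)
    (hf : Continuous f) (hC : ∀ y, |f y| ≤ C) (x : ℝ) :
    stableSemigroup μ (a + b) f x = stableSemigroup μ a (stableSemigroup μ b f) x := by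
  have := hμ.integral_integral ha hb (k := fun y ↦ f (x - y)) (by fun_prop) fun _ ↦ hC _
  simp only [stableSemigroup, ← this, sub_sub]

theorem stableSemigroup_add_intervalIntegral {F : ℝ → ℝ → ℝ} {B : ℝ} (hf : Continuous f)
    (hB : ∀ y, |f y| ≤ B) (hF : Continuous ↿F) (hC : ∀ r y, |F r y| ≤ C) (a b t x : ℝ) :
    stableSemigroup μ t (fun y ↦ f y + ∫ r in a..b, F r y) x =
      stableSemigroup μ t f x + ∫ r in a..b, stableSemigroup μ t (F r) x := by
  have : IsFiniteMeasure (volume.restrict (Set.uIoc a b)) :=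
    inferInstanceAs (IsFiniteMeasure (volume.restrict (Set.Ioc _ _)))
  have F_cont : Continuous fun p : ℝ × ℝ ↦ F p.1 (x - t * p.2) :=
    hF.comp (by fun_prop : Continuous fun p : ℝ × ℝ ↦ (p.1, x - t * p.2))
  have F_int : Integrable (fun p : ℝ × ℝ ↦ F p.1 (x - t * p.2))
      ((volume.restrict (Set.uIoc a b)).prod μ) :=
    .of_bound F_cont.aestronglyMeasurable C (.of_forall fun p ↦ hC _ _)
  have integral_F_int : Integrable (fun z ↦ ∫ r in a..b, F r (x - t * z)) μ := by
    simp only [intervalIntegral.intervalIntegral_eq_integral_uIoc, smul_eq_mul]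
    exact F_int.integral_prod_right.const_mul _
  simp only [stableSemigroup]
  rw [integral_add (integrable_comp_sub_mul hf hB t x) integral_F_int,
    intervalIntegral_integral_swap F_int]

theorem stableSemigroup_le_add_mul_measureReal_Iic {t x m M Λ : ℝ} (ht : 0 ≤ t)
    (hf : Integrable (fun z ↦ f (x - t * z)) μ) (hM : ∀ y, f y ≤ M)
    (hm : ∀ y ≤ x + t * Λ, f y ≤ m) :
    stableSemigroup μ t f x ≤ m + (M - m) * μ.real (Set.Iic (-Λ)) := by
  have int_indicator : Integrable ((Set.Iic (-Λ)).indicator fun _ ↦ M - m) μ :=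
    (integrable_const _).indicator measurableSet_Iic
  calc stableSemigroup μ t f x
    _ ≤ ∫ z, (m + (Set.Iic (-Λ)).indicator (fun _ ↦ M - m) z) ∂μ := by
      refine integral_mono hf ((integrable_const m).add int_indicator) fun z ↦ ?_
      by_cases hz : z ∈ Set.Iic (-Λ)
      · simpa [hz] using hM (x - t * z)
      · have : t * -Λ ≤ t * z := mul_le_mul_of_nonneg_left (not_le.1 hz).le ht
        simpa [Set.indicator_of_notMem hz] using hm (x - t * z) (by linarith)
    _ = m + (M - m) * μ.real (Set.Iic (-Λ)) := by
      rw [integral_add (integrable_const m) int_indicator,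
        integral_indicator_const _ measurableSet_Iic]
      simp [mul_comm]

variable (μ) in
theorem tendsto_measureReal_Iic_neg_atTop :
    Tendsto (fun Λ : ℝ ↦ μ.real (Set.Iic (-Λ))) atTop (𝓝 0) := by
  simpa only [Function.comp_def, cdf_eq_real]
    using (tendsto_cdf_atBot μ).comp tendsto_neg_atTop_atBot

end StableSemigroup

theorem le_mul_exp_add_div_of_deriv_add_mul_le {φ φ' : ℝ → ℝ} {a B m t₀ t₁ : ℝ} (ha : 0 < a)
    (hB : 0 ≤ B) (h01 : t₀ ≤ t₁)
    (hφ : ∀ s ∈ Set.Icc t₀ t₁, HasDerivWithinAt φ (φ' s) (Set.Icc t₀ t₁) s)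
    (hφ' : ∀ s ∈ Set.Icc t₀ t₁, φ' s + a * φ s ≤ B) (hm : φ t₀ ≤ m) :
    φ t₁ ≤ m * exp (-a * (t₁ - t₀)) + B / a := by
  have gronwall := le_gronwallBound_of_liminf_deriv_right_le (K := -a) (ε := B)
    (fun s hs ↦ (hφ s hs).continuousWithinAt)
    (fun s hs r hr ↦ ((hφ s (Set.Ico_subset_Icc_self hs)).mono_of_mem_nhdsWithin
      (Icc_mem_nhdsGE_of_mem hs)).liminf_right_slope_le hr)
    hm (fun s hs ↦ by linarith [hφ' s (Set.Ico_subset_Icc_self hs)])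
    t₁ (Set.right_mem_Icc.2 h01)
  have : 0 ≤ B / a * exp (-a * (t₁ - t₀)) := by positivity
  rw [gronwallBound_of_K_ne_0 (neg_ne_zero.2 ha.ne'), div_neg] at gronwall
  linarith

theorem forall_nonneg_of_forall_le_sub {p : ℝ → Prop} {h : ℝ} (hh : 0 < h)
    (step : ∀ t, 0 ≤ t → (∀ s, 0 ≤ s → s ≤ t - h → p s) → p t) {t : ℝ} (ht : 0 ≤ t) : p t := by
  have below (n : ℕ) : ∀ s, 0 ≤ s → s < n * h → p s := by
    induction n with
    | zero => intro s hs hsn; simp at hsn; linarith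
    | succ n ih =>
      intro s hs hsn
      push_cast at hsn
      refine step s hs fun r hr hrs ↦ ?_
      rcases lt_or_ge r (n * h) with hrn | hrn
      · exact ih r hr hrn
      · linarith
  obtain ⟨n, hn⟩ := exists_nat_gt (t / h)
  exact below n t ht ((div_lt_iff₀ hh).1 hn)

/-- `U` is a bounded mild solution on `t ≥ 0`, with initial datum `U 0` and source `G`, of the
evolution equation generated by `stableSemigroup μ`. Time is the first argument, so that `U t` is a
function on `ℝ`; continuity and the bounds are required at all real times. -/
structure IsStableMildSolution (μ : Measure ℝ) (U G : ℝ → ℝ → ℝ) (M C : ℝ) : Prop where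
  continuous_sol : Continuous ↿U
  continuous_source : Continuous ↿G
  abs_sol_le : ∀ t x, |U t x| ≤ M
  abs_source_le : ∀ t x, |G t x| ≤ C
  duhamel : ∀ t x, 0 ≤ t → U t x = stableSemigroup μ t (U 0) x +
    ∫ s in (0 : ℝ)..t, stableSemigroup μ (t - s) (G s) x

namespace IsStableMildSolution

variable {μ : Measure ℝ} [IsProbabilityMeasure μ] {U G : ℝ → ℝ → ℝ} {M C : ℝ}

theorem stableSemigroup_sub_eq_add_integral (hU : IsStableMildSolution μ U G M C)
    (hμ : IsStrictlyOneStable μ) {s t : ℝ} (hs : 0 ≤ s) (hst : s ≤ t) (x : ℝ) :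
    stableSemigroup μ (t - s) (U s) x = stableSemigroup μ t (U 0) x +
      ∫ r in (0 : ℝ)..s, stableSemigroup μ (t - r) (G r) x := by
  have U_cont (r : ℝ) : Continuous (U r) := hU.continuous_sol.uncurry_left r
  have G_cont (r : ℝ) : Continuous (G r) := hU.continuous_source.uncurry_left r
  set source : ℝ → ℝ → ℝ := fun r ↦ stableSemigroup μ (s - r) (G r)
  have source_cont : Continuous ↿source :=
    continuous_stableSemigroup (X := ℝ × ℝ) (F := fun p ↦ G p.1) (by fun_prop) (by fun_prop)
      (hU.continuous_source.comp (by fun_prop : Continuous fun q : (ℝ × ℝ) × ℝ ↦ (q.1.1, q.2)))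
      fun _ ↦ hU.abs_source_le _
  have free_cont : Continuous (stableSemigroup μ s (U 0)) :=
    continuous_stableSemigroup (by fun_prop) continuous_id
      ((U_cont 0).comp continuous_snd) fun _ ↦ hU.abs_sol_le 0
  calc stableSemigroup μ (t - s) (U s) x
    _ = stableSemigroup μ (t - s)
          (fun y ↦ stableSemigroup μ s (U 0) y + ∫ r in (0 : ℝ)..s, source r y) x :=
      congrArg (stableSemigroup μ (t - s) · x) (funext fun y ↦ hU.duhamel s y hs)
    _ = stableSemigroup μ (t - s) (stableSemigroup μ s (U 0)) x +
          ∫ r in (0 : ℝ)..s, stableSemigroup μ (t - s) (source r) x :=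
      stableSemigroup_add_intervalIntegral free_cont (abs_stableSemigroup_le (hU.abs_sol_le 0) s)
        source_cont (fun r ↦ abs_stableSemigroup_le (hU.abs_source_le r) _) ..
    _ = stableSemigroup μ t (U 0) x +
          ∫ r in (0 : ℝ)..s, stableSemigroup μ (t - r) (G r) x := by
      congr 1
      · rw [← stableSemigroup_add_apply hμ (sub_nonneg.2 hst) hs (U_cont 0) (hU.abs_sol_le 0),
          sub_add_cancel]
      · refine intervalIntegral.integral_congr fun r hr ↦ ?_
        rw [Set.uIcc_of_le hs] at hr
        simp only [source]
        rw [← stableSemigroup_add_apply hμ (sub_nonneg.2 hst) (sub_nonneg.2 hr.2) (G_cont r)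
          (hU.abs_source_le r), sub_add_sub_cancel]

theorem hasDerivWithinAt_stableSemigroup_sub (hU : IsStableMildSolution μ U G M C)
    (hμ : IsStrictlyOneStable μ) {s t : ℝ} (hs : s ∈ Set.Icc 0 t) (x : ℝ) :
    HasDerivWithinAt (fun r ↦ stableSemigroup μ (t - r) (U r) x)
      (stableSemigroup μ (t - s) (G s) x) (Set.Icc 0 t) s := by
  have source_cont : Continuous fun r ↦ stableSemigroup μ (t - r) (G r) x :=
    continuous_stableSemigroup (by fun_prop) continuous_const hU.continuous_source
      hU.abs_source_le
  have deriv_integral := (source_cont.integral_hasStrictDerivAt 0 s).hasDerivAt.const_add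
    (stableSemigroup μ t (U 0) x)
  exact deriv_integral.hasDerivWithinAt.congr_of_mem
    (fun r hr ↦ hU.stableSemigroup_sub_eq_add_integral hμ hr.1 hr.2 x) hs

theorem le_stableSemigroup_sub_add (hU : IsStableMildSolution μ U G M C)
    (hμ : IsStrictlyOneStable μ) {s t : ℝ} (hs : 0 ≤ s) (hst : s ≤ t) (x : ℝ) :
    U t x ≤ stableSemigroup μ (t - s) (U s) x + C * (t - s) := by
  have lipschitz := (convex_Icc 0 t).norm_image_sub_le_of_norm_hasDerivWithin_le (C := C)
    (fun r hr ↦ hU.hasDerivWithinAt_stableSemigroup_sub hμ hr x)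
    (fun r _ ↦ abs_stableSemigroup_le (hU.abs_source_le r) _ x) ⟨hs, hst⟩
    (Set.right_mem_Icc.2 (hs.trans hst))
  rw [sub_self, stableSemigroup_zero, norm_eq_abs, norm_eq_abs,
    abs_of_nonneg (sub_nonneg.2 hst)] at lipschitz
  linarith [le_of_abs_le lipschitz]

theorem stableSemigroup_sol_le (hU : IsStableMildSolution μ U G M C) {s t x m Λ : ℝ} (ht : 0 ≤ t)
    (hm : 0 ≤ m) (hle : ∀ y ≤ x + t * Λ, U s y ≤ m) :
    stableSemigroup μ t (U s) x ≤ m + M * μ.real (Set.Iic (-Λ)) := by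
  have U_int := integrable_comp_sub_mul (μ := μ) (hU.continuous_sol.uncurry_left s)
    (hU.abs_sol_le s) t x
  refine (stableSemigroup_le_add_mul_measureReal_Iic ht U_int
    (fun y ↦ le_of_abs_le (hU.abs_sol_le s y)) hle).trans ?_
  gcongr
  exact sub_le_self M hm

section Damping

variable {a δ : ℝ}

theorem stableSemigroup_source_add_mul_le (hU : IsStableMildSolution μ U G M C) (ha : 0 ≤ a)
    (hG : ∀ t x, U t x ≤ δ → G t x ≤ -a * U t x) {s t x Λ : ℝ} (hst : s ≤ t)
    (hcone : ∀ y ≤ x + (t - s) * Λ, U s y ≤ δ) :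
    stableSemigroup μ (t - s) (G s) x + a * stableSemigroup μ (t - s) (U s) x ≤
      (C + a * M) * μ.real (Set.Iic (-Λ)) := by
  have U_int := integrable_comp_sub_mul (μ := μ) (hU.continuous_sol.uncurry_left s)
    (hU.abs_sol_le s) (t - s) x
  have G_int := integrable_comp_sub_mul (μ := μ) (hU.continuous_source.uncurry_left s)
    (hU.abs_source_le s) (t - s) x
  calc stableSemigroup μ (t - s) (G s) x + a * stableSemigroup μ (t - s) (U s) x
    _ = stableSemigroup μ (t - s) (fun y ↦ G s y + a * U s y) x := by
      simp only [stableSemigroup]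
      rw [integral_add G_int (U_int.const_mul a), integral_const_mul]
    _ ≤ 0 + (C + a * M - 0) * μ.real (Set.Iic (-Λ)) := by
      refine stableSemigroup_le_add_mul_measureReal_Iic (sub_nonneg.2 hst)
        (G_int.add (U_int.const_mul a)) (fun y ↦ ?_) fun y hy ↦ ?_
      · gcongr
        · exact le_of_abs_le (hU.abs_source_le s y)
        · exact le_of_abs_le (hU.abs_sol_le s y)
      · linarith [hG s y (hcone y hy)]
    _ = (C + a * M) * μ.real (Set.Iic (-Λ)) := by ring

theorem stableSemigroup_sub_le_mul_exp_add (hU : IsStableMildSolution μ U G M C)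
    (hμ : IsStrictlyOneStable μ) (ha : 0 < a) (hG : ∀ t x, U t x ≤ δ → G t x ≤ -a * U t x)
    {t₀ t₁ t x Λ m : ℝ} (h0 : 0 ≤ t₀) (h01 : t₀ ≤ t₁) (h1 : t₁ ≤ t)
    (hcone : ∀ s ∈ Set.Icc t₀ t₁, ∀ y ≤ x + (t - s) * Λ, U s y ≤ δ)
    (hm : stableSemigroup μ (t - t₀) (U t₀) x ≤ m) :
    stableSemigroup μ (t - t₁) (U t₁) x ≤
      m * exp (-a * (t₁ - t₀)) + (C / a + M) * μ.real (Set.Iic (-Λ)) := by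
  have hM : 0 ≤ M := (abs_nonneg _).trans (hU.abs_sol_le 0 0)
  have hC : 0 ≤ C := (abs_nonneg _).trans (hU.abs_source_le 0 0)
  have Icc_subset : Set.Icc t₀ t₁ ⊆ Set.Icc 0 t := Set.Icc_subset_Icc h0 h1
  have gronwall := le_mul_exp_add_div_of_deriv_add_mul_le ha
    (B := (C + a * M) * μ.real (Set.Iic (-Λ))) (by positivity) h01
    (fun s hs ↦ (hU.hasDerivWithinAt_stableSemigroup_sub hμ (Icc_subset hs) x).mono Icc_subset)
    (fun s hs ↦ hU.stableSemigroup_source_add_mul_le ha.le hG (hs.2.trans h1) (hcone s hs)) hm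
  convert gronwall using 2
  field_simp

theorem sol_le_on_cone (hU : IsStableMildSolution μ U G M C)
    (hμ : IsStrictlyOneStable μ) (ha : 0 < a) (hδ : 0 < δ)
    (hG : ∀ t x, U t x ≤ δ → G t x ≤ -a * U t x) {c x₀ : ℝ}
    (hc : (C / a + 2 * M) * μ.real (Set.Iic (-c)) ≤ δ / 4) (hU₀ : ∀ y ≤ x₀, U 0 y ≤ δ / 4)
    {t : ℝ} (ht : 0 ≤ t) : ∀ x ≤ x₀ - c * t, U t x ≤ δ := by
  have hM : 0 ≤ M := (abs_nonneg _).trans (hU.abs_sol_le 0 0)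
  have hC : 0 ≤ C := (abs_nonneg _).trans (hU.abs_source_le 0 0)
  -- Along `s ↦ P_{t-s} U(s)(x)` the source adds at most `δ / 2` in a time step of this length.
  have hh : 0 < δ / (2 * (C + 1)) := by positivity
  set q := μ.real (Set.Iic (-c))
  have : 0 ≤ q := measureReal_nonneg
  refine forall_nonneg_of_forall_le_sub (p := fun t ↦ ∀ x ≤ x₀ - c * t, U t x ≤ δ) hh
    (fun t ht ih x hx ↦ ?_) ht
  set T := max (t - δ / (2 * (C + 1))) 0
  have hT : 0 ≤ T := le_max_right _ _
  have hTt : T ≤ t := max_le (by linarith) ht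
  have cone : ∀ s ∈ Set.Icc 0 T, ∀ y ≤ x + (t - s) * c, U s y ≤ δ := by
    intro s hs y hy
    rcases le_max_iff.1 hs.2 with hsT | hs0
    · exact ih s hs.1 hsT y (by linarith)
    · obtain rfl : s = 0 := le_antisymm hs0 hs.1
      exact (hU₀ y (by linarith)).trans (by linarith)
  have initial : stableSemigroup μ (t - 0) (U 0) x ≤ δ / 4 + M * q :=
    hU.stableSemigroup_sol_le (sub_nonneg.2 ht) (by positivity) fun y hy ↦ hU₀ y (by linarith)
  have exp_le : exp (-a * (T - 0)) ≤ 1 := exp_le_one_iff.2 (by nlinarith)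
  calc U t x
    _ ≤ stableSemigroup μ (t - T) (U T) x + C * (t - T) :=
      hU.le_stableSemigroup_sub_add hμ hT hTt x
    _ ≤ (δ / 4 + M * q) * exp (-a * (T - 0)) + (C / a + M) * q + (C + 1) * (δ / (2 * (C + 1))) := by
      gcongr
      · exact hU.stableSemigroup_sub_le_mul_exp_add hμ ha hG le_rfl hT hTt cone initial
      · linarith
      · linarith [le_max_left (t - δ / (2 * (C + 1))) 0]
    _ ≤ (δ / 4 + M * q) * 1 + (C / a + M) * q + δ / 2 := by
      gcongr
      field_simp
      rfl
    _ ≤ δ := by linarith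

theorem eventually_lt_of_le_on_cone (hU : IsStableMildSolution μ U G M C)
    (hμ : IsStrictlyOneStable μ) (ha : 0 < a) (hG : ∀ t x, U t x ≤ δ → G t x ≤ -a * U t x)
    {c c' x₀ : ℝ} (hc : 0 ≤ c) (hcc' : c < c') (hcone : ∀ t, 0 ≤ t → ∀ x ≤ x₀ - c * t, U t x ≤ δ)
    {ε : ℝ} (hε : 0 < ε) : ∀ᶠ t in atTop, ∀ x ≤ -c' * t, U t x < ε := by
  obtain ⟨Λ, hΛε, hΛ⟩ : ∃ Λ, (C / a + M) * μ.real (Set.Iic (-Λ)) < ε / 2 ∧ 0 < Λ := by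
    have tail := (tendsto_measureReal_Iic_neg_atTop μ).const_mul (C / a + M)
    rw [mul_zero] at tail
    exact ((tail.eventually_lt_const (half_pos hε)).and (eventually_gt_atTop 0)).exists
  obtain ⟨N, hNε, hN⟩ : ∃ N : ℝ, M * exp (-a * N) < ε / 2 ∧ 0 < N := by
    have decay := ((tendsto_exp_atBot.comp
      (tendsto_id.const_mul_atTop_of_neg (neg_neg_of_pos ha))).const_mul M)
    rw [mul_zero] at decay
    exact ((decay.eventually_lt_const (half_pos hε)).and (eventually_gt_atTop 0)).exists
  -- The cone of slope `Λ` and height `N` below `(x, t)` lies in the region where `U ≤ δ`.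
  have gap : ∀ᶠ t in atTop, N * Λ - x₀ ≤ (c' - c) * t :=
    (tendsto_id.const_mul_atTop (sub_pos.2 hcc')).eventually_ge_atTop _
  filter_upwards [gap, eventually_ge_atTop N] with t hgap hNt x hx
  have cone : ∀ s ∈ Set.Icc (t - N) t, ∀ y ≤ x + (t - s) * Λ, U s y ≤ δ := by
    intro s hs y hy
    have travelled : (t - s) * Λ ≤ N * Λ := by gcongr; linarith [hs.1]
    have : c * s ≤ c * t := by gcongr; exact hs.2
    exact hcone s (by linarith [hs.1]) y (by linarith)
  have decayed := hU.stableSemigroup_sub_le_mul_exp_add hμ ha hG (sub_nonneg.2 hNt)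
    (sub_le_self t hN.le) le_rfl cone (le_of_abs_le (abs_stableSemigroup_le (hU.abs_sol_le _) _ x))
  rw [sub_self, stableSemigroup_zero, sub_sub_cancel] at decayed
  linarith

end Damping

theorem exists_speed_forall_eventually_lt (hU : IsStableMildSolution μ U G M C)
    (hμ : IsStrictlyOneStable μ) {a δ : ℝ} (ha : 0 < a) (hδ : 0 < δ)
    (hG : ∀ t x, U t x ≤ δ → G t x ≤ -a * U t x) (hU₀ : Tendsto (U 0) atBot (𝓝 0)) :
    ∃ c, 0 < c ∧ ∀ ε, 0 < ε → ∀ᶠ t in atTop, ∀ x ≤ -c * t, U t x < ε := by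
  obtain ⟨x₀, hx₀⟩ := eventually_atBot.1 (hU₀.eventually_le_const (by linarith : 0 < δ / 4))
  obtain ⟨c, hcδ, hc⟩ : ∃ c, (C / a + 2 * M) * μ.real (Set.Iic (-c)) ≤ δ / 4 ∧ 0 ≤ c := by
    have tail := (tendsto_measureReal_Iic_neg_atTop μ).const_mul (C / a + 2 * M)
    rw [mul_zero] at tail
    exact ((tail.eventually_le_const (by linarith)).and (eventually_ge_atTop 0)).exists
  refine ⟨c + 1, by linarith, fun ε hε ↦ ?_⟩
  exact hU.eventually_lt_of_le_on_cone hμ ha hG hc (lt_add_one c)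
    (fun t ht ↦ hU.sol_le_on_cone hμ ha hδ hG hcδ hx₀ ht) hε

end IsStableMildSolution

theorem integral_stableKernel_mul (σ : ℝ) {κ : ℝ≥0} (hκ : κ ≠ 0) {t : ℝ} (ht : 0 < t) (f : ℝ → ℝ)
    (x : ℝ) :
    ∫ y, stableKernel κ σ t (x - y) * f y = stableSemigroup (cauchyMeasure σ κ) t f x := by
  calc ∫ y, stableKernel κ σ t (x - y) * f y
    _ = ∫ y, stableKernel κ σ t y * f (x - y) := by
      rw [← integral_sub_left_eq_self _ volume x]
      simp only [sub_sub_cancel]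
    _ = t * ∫ z, stableKernel κ σ t (t * z) * f (x - t * z) := by
      rw [Measure.integral_comp_mul_left (fun y ↦ stableKernel κ σ t y * f (x - y)) t,
        abs_of_pos (inv_pos.2 ht), smul_eq_mul, mul_inv_cancel_left₀ ht.ne']
    _ = ∫ z, cauchyPDFReal σ κ z * f (x - t * z) := by
      rw [← integral_const_mul]
      congr 1; ext z
      have : (z - σ) ^ 2 + (κ : ℝ) ^ 2 ≠ 0 := by positivity
      have : (t * z - σ * t) ^ 2 + (κ * t) ^ 2 = t ^ 2 * ((z - σ) ^ 2 + κ ^ 2) := by ring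
      rw [stableKernel, cauchyPDFReal_def, this]
      field_simp
    _ = stableSemigroup (cauchyMeasure σ κ) t f x := (integral_cauchyMeasure σ hκ _).symm

theorem isStableMildSolution_of_isMildSolution {κ : ℝ≥0} (hκ : κ ≠ 0) {σ : ℝ} {g : ℝ → ℝ}
    (hg : ContinuousOn g (Set.Icc 0 1)) {u : ℝ → ℝ → ℝ}
    (hu_cont : ContinuousOn (fun p : ℝ × ℝ ↦ u p.1 p.2) (Set.univ ×ˢ Set.Ici 0))
    (hu_bdd : ∀ x t, 0 ≤ t → u x t ∈ Set.Icc 0 1) (hu : ∀ T, 0 < T → IsMildSolution κ σ g T u) :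
    ∃ C, IsStableMildSolution (cauchyMeasure σ κ) (fun t x ↦ u x (max t 0))
      (fun t x ↦ g (u x (max t 0))) 1 C := by
  obtain ⟨C, hC⟩ := isCompact_Icc.exists_bound_of_continuousOn hg
  have u_mem (t x : ℝ) : u x (max t 0) ∈ Set.Icc 0 1 := hu_bdd x _ (le_max_right t 0)
  have u_cont : Continuous fun p : ℝ × ℝ ↦ u p.2 (max p.1 0) :=
    hu_cont.comp_continuous (by fun_prop : Continuous fun p : ℝ × ℝ ↦ (p.2, max p.1 0)) (by simp)
  refine ⟨C, u_cont, hg.comp_continuous u_cont fun p ↦ u_mem p.1 p.2,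
    fun t x ↦ abs_le.2 ⟨by linarith [(u_mem t x).1], (u_mem t x).2⟩,
    fun t x ↦ hC _ (u_mem t x), fun t x ht ↦ ?_⟩
  rcases ht.eq_or_lt with rfl | ht
  · simp [stableSemigroup_zero]
  rw [max_eq_left ht.le, max_self, hu t ht x t ht le_rfl, integral_stableKernel_mul σ hκ ht,
    intervalIntegral.integral_of_le ht.le, integral_Ioc_eq_integral_Ioo,
    integral_Ioc_eq_integral_Ioo]
  congr 1
  refine setIntegral_congr_fun measurableSet_Ioo fun s hs ↦ ?_
  simp only [max_eq_left hs.1.le]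
  exact integral_stableKernel_mul σ hκ (sub_pos.2 hs.2) (fun y ↦ g (u y s)) x

theorem eventually_nhdsGE_le_mul_of_derivWithin_lt {g : ℝ → ℝ} {b m : ℝ} (hb : 0 < b)
    (hg : DifferentiableWithinAt ℝ g (Set.Icc 0 b) 0) (hg0 : g 0 = 0)
    (hm : derivWithin g (Set.Icc 0 b) 0 < m) : ∀ᶠ v in 𝓝[≥] 0, g v ≤ m * v := by
  have slope_lt := hg.hasDerivWithinAt.limsup_slope_le hm
  rw [Set.Icc_sdiff_left, nhdsWithin_Ioc_eq_nhdsGT hb] at slope_lt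
  rw [← Set.Ioi_insert, nhdsWithin_insert, eventually_sup, eventually_pure]
  refine ⟨by simp [hg0], ?_⟩
  filter_upwards [slope_lt, self_mem_nhdsWithin] with v hv hv0
  rw [slope_def_field, hg0, sub_zero, sub_zero, div_lt_iff₀ hv0] at hv
  exact hv.le

theorem finite_speed_of_spread_general {κ σ : ℝ} (hκ : 0 < κ) {g : ℝ → ℝ}
    (hg : ContinuousOn g (Set.Icc 0 1)) {m : ℝ} (hm : m < 0)
    (hg0 : ∀ᶠ v in 𝓝[≥] 0, g v ≤ m * v) {u : ℝ → ℝ → ℝ}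
    (hu_cont : ContinuousOn (fun p : ℝ × ℝ ↦ u p.1 p.2) (Set.univ ×ˢ Set.Ici 0))
    (hu_bdd : ∀ x t, 0 ≤ t → u x t ∈ Set.Icc 0 1) (hu : ∀ T, 0 < T → IsMildSolution κ σ g T u)
    (hu0 : Tendsto (fun x ↦ u x 0) atBot (𝓝 0)) :
    ∃ c, 0 < c ∧ ∀ ε, 0 < ε → ∃ T, 0 < T ∧ ∀ t, T ≤ t → ∀ x ≤ -c * t, u x t < ε := by
  lift κ to ℝ≥0 using hκ.le
  obtain ⟨C, hU⟩ :=
    isStableMildSolution_of_isMildSolution (by simpa using hκ.ne') hg hu_cont hu_bdd hu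
  obtain ⟨δ, hδ, hgδ⟩ := mem_nhdsGE_iff_exists_Icc_subset.1 hg0
  obtain ⟨c, hc, spread⟩ := hU.exists_speed_forall_eventually_lt
    (isStrictlyOneStable_cauchyMeasure σ κ) (neg_pos.2 hm) hδ (fun t x hle ↦ by
      simpa using hgδ ⟨(hu_bdd x _ (le_max_right t 0)).1, hle⟩) (by simpa using hu0)
  refine ⟨c, hc, fun ε hε ↦ ?_⟩
  obtain ⟨T, hT⟩ := eventually_atTop.1 (spread ε hε)
  refine ⟨max T 1, by positivity, fun t ht x hx ↦ ?_⟩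
  have ht0 : 0 ≤ t := zero_le_one.trans ((le_max_right T 1).trans ht)
  simpa [max_eq_left ht0] using hT t ((le_max_left T 1).trans ht) x hx

/-- Finite speed of spread (the α = 1 case). Let `g` be C¹ on
`[0,1]` (extended locally Lipschitz to ℝ) with `g(0) = g(1) = 0` and
`g'(0) < 0`. Let `u` be a continuous mild solution of `∂_t u + Au = g(u)`
with `0 ≤ u ≤ 1`, whose initial datum vanishes on `(-∞,0)` and tends to `1`
at `+∞`. Then there exists `c > 0` such that for every `ε > 0` there exists
`T > 0` with `u(x,t) < ε` whenever `t ≥ T` and `x ≤ −ct`; i.e.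
`limsup_{t→∞} sup_{x ≤ −ct} u(x,t) = 0` for some `c > 0`. -/
theorem finite_speed_of_spread
    (β : ℝ) (hβ : β ∈ Set.Ioo (-1 : ℝ) 1)
    (κ σ : ℝ) (hκ : κ = Real.cos (π * β / 2)) (hσ : σ = Real.sin (π * β / 2))
    (g : ℝ → ℝ) (hg_lip : LocallyLipschitz g)
    (hg_C1 : ContDiffOn ℝ 1 g (Set.Icc 0 1))
    (hg0 : g 0 = 0) (hg1 : g 1 = 0)
    (hg'0 : derivWithin g (Set.Icc 0 1) 0 < 0)
    (u : ℝ → ℝ → ℝ)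
    (hu_cont : ContinuousOn (fun p : ℝ × ℝ => u p.1 p.2)
      (Set.univ ×ˢ Set.Ici 0))
    (hu_bdd : ∀ x : ℝ, ∀ t : ℝ, 0 ≤ t → u x t ∈ Set.Icc (0 : ℝ) 1)
    (hu : ∀ T : ℝ, 0 < T → IsMildSolution κ σ g T u)
    (hu0_supp : ∀ x : ℝ, x < 0 → u x 0 = 0)
    (hu0_lim : Tendsto (fun x : ℝ => u x 0) atTop (𝓝 1)) :
    ∃ c : ℝ, 0 < c ∧ ∀ ε : ℝ, 0 < ε → ∃ T : ℝ, 0 < T ∧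
      ∀ t : ℝ, T ≤ t → ∀ x : ℝ, x ≤ -c * t → u x t < ε := by
  obtain ⟨m, hm, hm0⟩ := exists_between hg'0
  exact finite_speed_of_spread_general
    (hκ ▸ cos_pos_of_mem_Ioo ⟨by nlinarith [hβ.1, pi_pos], by nlinarith [hβ.2, pi_pos]⟩)
    hg_C1.continuousOn hm0 (eventually_nhdsGE_le_mul_of_derivWithin_lt one_pos
      (hg_C1.differentiableOn one_ne_zero 0 (by simp)) hg0 hm) hu_cont hu_bdd hu
    (tendsto_const_nhds.congr' ((eventually_lt_atBot 0).mono fun x hx ↦ (hu0_supp x hx).symm))
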